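/- Let N be a positive even integer and h ∈ (1/N)ℤ. Then for all τ = u+iv ∈ H, ξ_{1/2} ϑ̃_{N,h}(τ) = (1/√2) · ∑_{r ∈ Nℤ+h} r · e(r²τ/2); that is, 2i·v^{1/2}·conj(∂/∂conj(τ) ϑ̃_{N,h}(τ)) = (1/√2) 𝛉_{N,h}(τ), where 𝛉_{N,h}(τ) := ∑_{r ∈ Nℤ+h} r e(r²τ/2). -/

import Mathlib

open Complex MeasureTheory
open scoped Classical

noncomputable section

/-- `e(a) = exp(2πia)`. -/
def e (a : ℂ) : ℂ := Complex.exp (2 * (Real.pi : ℂ) * Complex.I * a)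

/-- The Fourier transform `F(g)(x) = ∫ g(w) e(wx) dw`. -/
def fourierT (g : ℝ → ℂ) (x : ℝ) : ℂ := ∫ w : ℝ, g w * e ((w * x : ℝ))

/-- The operator `E_σ(f)(x) = e(x²σ/2) ∫_0^x e(-w²σ/2) f(w) dw`. -/
def Eop (σ : ℂ) (f : ℝ → ℂ) (x : ℝ) : ℂ :=
  e ((x : ℂ)^2 * σ / 2) * ∫ w in (0:ℝ)..x, e (-(w : ℂ)^2 * σ / 2) * f w

/-- `ω_τ(x) = e(-x²τ/2) ∑_{m ∈ ℤ+1/2, m ≥ |x|} e(m²τ/2 + m/2)`. -/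
def omega (τ : ℂ) (x : ℝ) : ℂ :=
  e (-(x : ℂ)^2 * τ / 2) *
    ∑' m : ℤ, if |x| ≤ (m : ℝ) + 1/2 then
      e (((m : ℂ) + 1/2)^2 / 2 * τ + ((m : ℂ) + 1/2) / 2) else 0

/-- `η³(τ) = -i ∑_{m ∈ ℤ+1/2} m e(m²τ/2 + m/2)`. -/
def eta3 (τ : ℂ) : ℂ :=
  -Complex.I * ∑' m : ℤ, ((m : ℂ) + 1/2) * e (((m : ℂ) + 1/2)^2 / 2 * τ + ((m : ℂ) + 1/2) / 2)

/-- The complementary error function. -/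
def erfc (x : ℝ) : ℝ := (2 / Real.sqrt Real.pi) * ∫ t in Set.Ioi x, Real.exp (-t^2)

/-- `g⁺_τ`. -/
def gplus (τ : ℂ) (x : ℝ) : ℂ :=
  e (-(x : ℂ)^2 * τ / 2) * ((Real.sign x : ℂ) / (Complex.I * eta3 τ)) *
    ∑' m : ℤ, if |x| < (m : ℝ) + 1/2 then
      (((m : ℝ) + 1/2 - |x| : ℝ) : ℂ) * e (((m : ℂ) + 1/2)^2 / 2 * τ + ((m : ℂ) + 1/2) / 2)
    else 0

/-- `g*_τ`. -/
def gstar (τ : ℂ) (x : ℝ) : ℂ :=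
  e (-(x : ℂ)^2 * τ / 2) * ((Real.sign x : ℂ) / 2) *
    (erfc (Real.sqrt (2 * Real.pi * τ.im) * |x|) : ℂ)

/-- `g_τ = g⁺_τ - g*_τ`. -/
def gfun (τ : ℂ) (x : ℝ) : ℂ := gplus τ x - gstar τ x

/-- The operator `ξ_k f = 2i v^k conj(∂f/∂τ̄)`, with `∂/∂τ̄ = (1/2)(∂/∂u + i ∂/∂v)`. -/
def xi (k : ℝ) (f : ℂ → ℂ) (τ : ℂ) : ℂ :=
  2 * Complex.I * ((τ.im ^ k : ℝ) : ℂ) *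
    (starRingEnd ℂ) ((1/2 : ℂ) * (fderiv ℝ f τ 1 + Complex.I * fderiv ℝ f τ Complex.I))

/-- Sum of divisors function `σ₁`. -/
def sigma1 (n : ℕ) : ℕ := ∑ d ∈ Nat.divisors n, d

/-- The weight 2 Eisenstein series `E₂`. -/
def E2 (τ : ℂ) : ℂ := 1 - 24 * ∑' n : ℕ, (sigma1 (n+1) : ℂ) * e ((n + 1 : ℂ) * τ)

/-- `ϑ̃_{N,h}`. -/
def tvtheta (N : ℕ) (h : ℝ) (τ : ℂ) : ℂ :=
  (if ∃ m : ℤ, h = (m : ℝ) + 1/2 then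
      e ((h : ℂ) / 2) * E2 τ / (12 * (N : ℂ) * Complex.I * eta3 τ) else 0)
  + ∑' n : ℤ, gfun τ ((N : ℝ) * n + h)

/-- The Schwartz function `φ_τ(x,y) = √(2v)·x·e(x²τ/2 - y²τ̄/2)`. -/
def Phi (τ : ℂ) (x y : ℝ) : ℂ :=
  (Real.sqrt (2 * τ.im) : ℂ) * (x : ℂ) *
    e ((x : ℂ)^2 * τ / 2 - (y : ℂ)^2 * (starRingEnd ℂ) τ / 2)

/-- The signature (1,1) bilinear form `B((a₁,a₂),(b₁,b₂)) = a₁b₂ + a₂b₁`. -/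
def Bform (a b : ℝ × ℝ) : ℝ := a.1 * b.2 + a.2 * b.1

/-- `Z⁺_t = (t/√2, t⁻¹/√2)`. -/
def Zp (t : ℝ) : ℝ × ℝ := (t / Real.sqrt 2, t⁻¹ / Real.sqrt 2)

/-- `Z⁻_t = (t/√2, -t⁻¹/√2)`. -/
def Zm (t : ℝ) : ℝ × ℝ := (t / Real.sqrt 2, -t⁻¹ / Real.sqrt 2)

end

noncomputable def qp (w : ℂ) (n : ℕ) : ℂ := ∏ i ∈ Finset.range n, (1 - Complex.exp (w * ((i : ℂ) + 1)))

noncomputable def qb (w : ℂ) : ℕ → ℕ → ℂ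
  | _, 0 => 1
  | 0, _ + 1 => 0
  | M + 1, k + 1 => qb w M k + Complex.exp (w * ((k : ℂ) + 1)) * qb w M (k + 1)

lemma qb_zero_right (w : ℂ) (M : ℕ) : qb w M 0 = 1 := by cases M <;> rfl

lemma qb_succ (w : ℂ) (M k : ℕ) : qb w (M+1) (k+1) =
    qb w M k + Complex.exp (w * ((k : ℂ) + 1)) * qb w M (k + 1) := rfl

lemma qb_gt (w : ℂ) (M : ℕ) : ∀ k, M < k → qb w M k = 0 := by
  induction M with
  | zero => intro k hk; cases k with
    | zero => omega
    | succ k => rfl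
  | succ M ih => intro k hk; cases k with
    | zero => omega
    | succ k => rw [qb_succ, ih k (by omega), ih (k+1) (by omega)]; simp

lemma qp_succ (w : ℂ) (n : ℕ) : qp w (n+1) = qp w n * (1 - Complex.exp (w * ((n : ℂ) + 1))) := by
  simp [qp, Finset.prod_range_succ]

lemma qb_self (w : ℂ) (M : ℕ) : qb w M M = 1 := by
  induction M with
  | zero => rfl
  | succ M ih => rw [qb_succ, ih, qb_gt w M (M+1) (by omega)]; simp

lemma qb_mul (w : ℂ) (s : ℕ) : ∀ a b, a + b = s → qb w (a + b) a * (qp w a * qp w b) = qp w (a+b) := by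
  induction s with
  | zero => intro a b h; obtain ⟨rfl, rfl⟩ : a = 0 ∧ b = 0 := by omega
            simp [qp, qb]
  | succ s ih =>
    intro a b h
    rcases a with _ | a
    · simp [qb_zero_right, qp]
    rcases b with _ | b
    · simp [qb_self, qp]
    have h1 := ih a (b+1) (by omega)
    have h2 := ih (a+1) b (by omega)
    have e1 : a + 1 + (b + 1) = (a + b + 1) + 1 := by omega
    have e2 : a + (b+1) = a + b + 1 := by omega
    have e3 : a + 1 + b = a + b + 1 := by omega
    rw [e2] at h1
    rw [e3] at h2
    rw [e1, qb_succ, qp_succ w (a+b+1)]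
    rw [qp_succ w b] at h1
    rw [qp_succ w a] at h2
    rw [qp_succ w a, qp_succ w b]
    have hE : Complex.exp (w * (((a + b + 1 : ℕ) : ℂ) + 1)) =
      Complex.exp (w * ((a : ℂ) + 1)) * Complex.exp (w * ((b : ℂ) + 1)) := by
      rw [← Complex.exp_add]; congr 1; push_cast; ring
    rw [hE]
    linear_combination (1 - Complex.exp (w * ((a : ℂ) + 1))) * h1 + Complex.exp (w * ((a : ℂ) + 1)) *
      (1 - Complex.exp (w * ((b : ℂ) + 1))) * h2

lemma qbinom (w : ℂ) (M : ℕ) : ∀ x : ℂ, ∏ j ∈ Finset.range M, (1 + x * Complex.exp (w * (j : ℂ))) =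
    ∑ k ∈ Finset.range (M+1), Complex.exp (w * ((k : ℂ) * (k - 1) / 2)) * qb w M k * x ^ k := by
  induction M with
  | zero => intro x; simp [qb]
  | succ M ih =>
    intro x
    have h1 : ∏ j ∈ Finset.range (M+1), (1 + x * Complex.exp (w * (j : ℂ))) =
        (1 + x) * ∏ j ∈ Finset.range M, (1 + (x * Complex.exp w) * Complex.exp (w * (j : ℂ))) := by
      rw [Finset.prod_range_succ', mul_comm]
      congr 1
      · simp
      · refine Finset.prod_congr rfl fun j _ => ?_
        rw [mul_assoc x, ← Complex.exp_add]; congr 3; push_cast; ring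
    rw [h1, ih, Finset.sum_range_succ' _ (M+1)]
    have h2 : ∀ k ∈ Finset.range (M+1),
        Complex.exp (w * (((k+1 : ℕ) : ℂ) * ((k+1 : ℕ) - 1) / 2)) * qb w (M+1) (k+1) * x ^ (k+1) =
        x * (Complex.exp (w * ((k : ℂ) * (k - 1) / 2)) * qb w M k * (x * Complex.exp w) ^ k) +
        Complex.exp (w * (((k+1 : ℕ) : ℂ) * ((k+1 : ℕ) - 1) / 2)) * qb w M (k+1) * (x * Complex.exp w) ^ (k+1) := by
      intro k _
      rw [qb_succ, mul_pow, mul_pow, ← Complex.exp_nat_mul, ← Complex.exp_nat_mul]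
      have e1 : Complex.exp (w * (((k+1 : ℕ) : ℂ) * ((k+1 : ℕ) - 1) / 2)) =
          Complex.exp (w * ((k : ℂ) * (k - 1) / 2)) * Complex.exp (k * w) := by
        rw [← Complex.exp_add]; congr 1; push_cast; ring
      have e2 : Complex.exp (((k+1 : ℕ) : ℂ) * w) = Complex.exp (w * ((k : ℂ) + 1)) := by
        congr 1; push_cast; ring
      rw [e2, e1]; ring
    rw [Finset.sum_congr rfl h2, Finset.sum_add_distrib, ← Finset.mul_sum]
    have h3 := Finset.sum_range_succ' (fun k : ℕ => Complex.exp (w * ((k : ℂ) * (k - 1) / 2)) * qb w M k * (x * Complex.exp w) ^ k) (M+1)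
    rw [Finset.sum_range_succ, qb_gt w M (M+1) (by omega)] at h3
    simp only [qb_zero_right, mul_zero, zero_mul, add_zero] at h3 ⊢
    simp only [pow_zero] at h3 ⊢
    linear_combination h3

lemma prod_neg (w : ℂ) (n : ℕ) : ∏ j ∈ Finset.range n, (1 - Complex.exp (w * ((j : ℂ) - n))) =
    (-1) ^ n * Complex.exp (-w * ((n : ℂ) * (n + 1) / 2)) * qp w n := by
  have : ∏ j ∈ Finset.range n, (1 - Complex.exp (w * ((j : ℂ) - n))) =
      ∏ j ∈ Finset.range n, (1 - Complex.exp (-w * ((j : ℂ) + 1))) := by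
    rw [← Finset.prod_range_reflect]
    refine Finset.prod_congr rfl fun j hj => ?_
    have : j < n := by simpa using hj
    congr 2
    rw [Nat.sub_sub, Nat.cast_sub (by omega)]; push_cast; ring
  rw [this]
  clear this
  induction n with
  | zero => simp [qp]
  | succ n ih =>
    rw [Finset.prod_range_succ, ih, qp_succ]
    have e1 : Complex.exp (-w * (((n+1 : ℕ) : ℂ) * ((n+1 : ℕ) + 1) / 2)) =
      Complex.exp (-w * ((n : ℂ) * (n + 1) / 2)) * Complex.exp (-w * ((n : ℂ) + 1)) := by
      rw [← Complex.exp_add]; congr 1; push_cast; ring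
    have e2 : Complex.exp (w * ((n : ℂ) + 1)) * Complex.exp (-w * ((n : ℂ) + 1)) = 1 := by
      rw [← Complex.exp_add]; simp
    rw [e1, pow_succ]
    linear_combination ((-1) ^ n * Complex.exp (-w * ((n : ℂ) * (n + 1) / 2)) * qp w n) * (-e2)

/-- finite Jacobi identity -/
lemma finJac (w : ℂ) (n : ℕ) :
    ∑ k ∈ Finset.range (2 * n + 2), ((k : ℂ) - n - 1 / 2) * (-1) ^ k *
      Complex.exp (w * (((k : ℂ) - n) * (k - n - 1) / 2)) * qb w (2 * n + 1) k =
    -(-1) ^ n * qp w n ^ 2 := by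
  set x₀ : ℂ := - Complex.exp (w * (-n)) with hx
  have hprod : (fun x : ℂ => ∏ j ∈ Finset.range (2*n+1), (1 + x * Complex.exp (w * (j : ℂ)))) =
     fun x => (1 + x * Complex.exp (w * (n : ℂ))) * ((∏ j ∈ Finset.range n, (1 + x * Complex.exp (w * (j : ℂ)))) *
       ∏ j ∈ Finset.range n, (1 + x * Complex.exp (w * ((n + 1 + j : ℕ) : ℂ)))) := by
    funext x
    rw [show 2 * n + 1 = (n + 1) + n by ring, Finset.prod_range_add, Finset.prod_range_succ]
    ring
  have hz : 1 + x₀ * Complex.exp (w * (n : ℂ)) = 0 := by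
    rw [hx, neg_mul, ← Complex.exp_add]; simp
  -- first identity
  have id0 := qbinom w (2*n+1) x₀
  rw [congrFun hprod x₀, hz, zero_mul] at id0
  -- derivative
  set R : ℂ → ℂ := fun x => ((∏ j ∈ Finset.range n, (1 + x * Complex.exp (w * (j : ℂ)))) *
       ∏ j ∈ Finset.range n, (1 + x * Complex.exp (w * ((n + 1 + j : ℕ) : ℂ)))) with hR
  have dR : DifferentiableAt ℂ R x₀ := by
    rw [hR]; fun_prop
  have d1 : HasDerivAt (fun x : ℂ => ∏ j ∈ Finset.range (2*n+1), (1 + x * Complex.exp (w * (j : ℂ))))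
      (Complex.exp (w * n) * R x₀) x₀ := by
    rw [hprod]
    have := (((hasDerivAt_id x₀).mul_const (Complex.exp (w * (n : ℂ)))).const_add 1).mul dR.hasDerivAt
    refine this.congr_deriv ?_
    simp only [id, hz]; ring
  have d2 : HasDerivAt (fun x : ℂ => ∏ j ∈ Finset.range (2*n+1), (1 + x * Complex.exp (w * (j : ℂ))))
      (∑ k ∈ Finset.range (2*n+1+1), Complex.exp (w * ((k : ℂ) * (k - 1) / 2)) * qb w (2*n+1) k * (k * x₀ ^ (k-1))) x₀ := by
    rw [funext (qbinom w (2*n+1))]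
    exact HasDerivAt.fun_sum fun k _ => (hasDerivAt_pow k x₀).const_mul _
  have id1 := d1.unique d2
  have hRv : R x₀ = (-1) ^ n * Complex.exp (-w * ((n : ℂ) * (n + 1) / 2)) * qp w n ^ 2 := by
    have a1 : ∏ j ∈ Finset.range n, (1 + x₀ * Complex.exp (w * (j : ℂ))) =
      ∏ j ∈ Finset.range n, (1 - Complex.exp (w * ((j : ℂ) - n))) := by
      refine Finset.prod_congr rfl fun j _ => ?_
      rw [hx, neg_mul, ← Complex.exp_add, ← sub_eq_add_neg]; congr 2; ring
    have a2 : ∏ j ∈ Finset.range n, (1 + x₀ * Complex.exp (w * ((n + 1 + j : ℕ) : ℂ))) = qp w n := by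
      refine Finset.prod_congr rfl fun j _ => ?_
      rw [hx, neg_mul, ← Complex.exp_add, ← sub_eq_add_neg]; congr 2; push_cast; ring
    simp only [hR]
    rw [a1, a2, prod_neg]; ring
  rw [hRv] at id1
  set c := Complex.exp (w * ((n : ℂ) * (n + 1) / 2)) with hc
  have key : ∀ k ∈ Finset.range (2*n+2), ((k : ℂ) - n - 1 / 2) * (-1) ^ k *
      Complex.exp (w * (((k : ℂ) - n) * (k - n - 1) / 2)) * qb w (2 * n + 1) k =
      c * x₀ * (Complex.exp (w * ((k : ℂ) * (k - 1) / 2)) * qb w (2*n+1) k * (k * x₀ ^ (k-1)))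
      - c * (n + 1/2) * (Complex.exp (w * ((k : ℂ) * (k - 1) / 2)) * qb w (2*n+1) k * x₀ ^ k) := by
    intro k _
    have hk : (k : ℂ) * x₀ ^ k = x₀ * (k * x₀ ^ (k-1)) := by
      rcases k with _ | k
      · simp
      · simp [pow_succ]; ring
    have hp : x₀ ^ k = (-1)^k * Complex.exp (k * (w * (-n))) := by
      rw [hx, neg_pow, Complex.exp_nat_mul]
    have hcc : Complex.exp (w * (((k : ℂ) - n) * (k - n - 1) / 2)) =
       c * Complex.exp (w * ((k : ℂ) * (k - 1) / 2)) * Complex.exp (k * (w * (-n))) := by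
      rw [hc, ← Complex.exp_add, ← Complex.exp_add]; congr 1; ring
    have : c * x₀ * (Complex.exp (w * ((k : ℂ) * (k - 1) / 2)) * qb w (2*n+1) k * (k * x₀ ^ (k-1)))
       = c * (Complex.exp (w * ((k : ℂ) * (k - 1) / 2)) * qb w (2*n+1) k * (k * x₀ ^ k)) := by
      rw [hk]; ring
    rw [this, hcc, hp]; ring
  rw [Finset.sum_congr rfl key, Finset.sum_sub_distrib, ← Finset.mul_sum, ← Finset.mul_sum, ← id0, ← id1, hx]
  have e1 : Complex.exp (w * (-n)) * Complex.exp (w * n) = 1 := by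
    rw [← Complex.exp_add]; simp
  have e2 : c * Complex.exp (-w * ((n : ℂ) * (n + 1) / 2)) = 1 := by
    rw [hc, ← Complex.exp_add]; simp
  linear_combination (-(-1)^n * qp w n ^ 2 * c * Complex.exp (-w * ((n : ℂ) * (n + 1) / 2))) * e1 -
    (-1)^n * qp w n ^ 2 * e2

lemma norm_e (a : ℂ) : ‖e a‖ = Real.exp (-2 * Real.pi * a.im) := by
  rw [e, Complex.norm_exp]
  congr 1
  simp

lemma summ_exp {N : ℝ} (hN : 1 ≤ N) (h : ℝ) {a : ℝ} (ha : 0 < a) :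
    Summable fun n : ℤ => Real.exp (-a * |N * n + h|) := by
  have h1 : Summable fun n : ℤ => Real.exp (a * |h|) * Real.exp (-a * |(n : ℝ)|) := by
    apply Summable.mul_left
    have : Summable fun n : ℕ => Real.exp (-a * |(n : ℝ)|) := by
      refine (Real.summable_exp_nat_mul_iff.2 (neg_neg_of_pos ha)).congr fun n => ?_
      rw [abs_of_nonneg (Nat.cast_nonneg n), mul_comm]
    apply Summable.of_nat_of_neg
    · simpa using this
    · simpa using this
  refine Summable.of_nonneg_of_le (fun _ => (Real.exp_pos _).le) (fun n => ?_) h1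
  rw [← Real.exp_add, Real.exp_le_exp]
  have h2 : |N * n| - |h| ≤ |N * n + h| := by
    have := abs_sub_abs_le_abs_sub (N * n) (-h)
    simpa using this
  have h3 : |(n : ℝ)| ≤ |N * n| := by
    rw [abs_mul, abs_of_pos (by linarith : 0 < N)]
    nlinarith [abs_nonneg (n : ℝ)]
  nlinarith

lemma summ_pow_exp {N : ℝ} (hN : 1 ≤ N) (h : ℝ) {a : ℝ} (ha : 0 < a) (k : ℕ) :
    Summable fun n : ℤ => |N * n + h| ^ k * Real.exp (-a * |N * n + h|) := by
  have h1 := (summ_exp hN h (half_pos ha)).mul_left (k.factorial * (2 / a) ^ k)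
  refine Summable.of_nonneg_of_le (fun _ => by positivity) (fun n => ?_) h1
  set y := |N * n + h|
  have hy : 0 ≤ y := abs_nonneg _
  have h2 := Real.pow_div_factorial_le_exp (a / 2 * y) (by positivity) k
  rw [div_le_iff₀ (by positivity)] at h2
  have h3 : Real.exp (-a * y) = Real.exp (-(a/2) * y) * Real.exp (-(a/2) * y) := by
    rw [← Real.exp_add]; congr 1; ring
  have h4 : Real.exp (a/2 * y) * Real.exp (-(a/2) * y) = 1 := by
    rw [← Real.exp_add]; simp
  calc y ^ k * Real.exp (-a * y) = (2 / a) ^ k * (a / 2 * y) ^ k * Real.exp (-a * y) := by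
        congr 1; rw [← mul_pow]; congr 1; field_simp
    _ ≤ (2 / a) ^ k * (Real.exp (a/2 * y) * k.factorial) * Real.exp (-a * y) := by gcongr
    _ = k.factorial * (2 / a) ^ k * Real.exp (-(a/2) * y) := by
        rw [h3]; linear_combination ((2 / a) ^ k * k.factorial * Real.exp (-(a/2) * y)) * h4

/-- Gaussian version -/
lemma summ_pow_gauss {N : ℝ} (hN : 1 ≤ N) (h : ℝ) {a : ℝ} (ha : 0 < a) (k : ℕ) :
    Summable fun n : ℤ => |N * n + h| ^ k * Real.exp (-a * (N * n + h) ^ 2) := by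
  have h1 := (summ_pow_exp hN h ha k).mul_left (Real.exp a)
  refine Summable.of_nonneg_of_le (fun _ => by positivity) (fun n => ?_) h1
  rw [← mul_assoc, mul_comm (Real.exp a), mul_assoc, ← Real.exp_add]
  gcongr
  rw [← sq_abs (N * n + h)]
  nlinarith [mul_nonneg ha.le (sq_nonneg (|N * n + h| - 1/2))]

lemma norm_e_half (m : ℤ) (τ : ℂ) : ‖e (((m : ℂ) + 1/2)^2 / 2 * τ + ((m : ℂ) + 1/2) / 2)‖ =
    Real.exp (-(Real.pi * τ.im) * ((m : ℝ) + 1/2) ^ 2) := by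
  rw [norm_e]
  congr 1
  have : (((m : ℂ) + 1/2)^2 / 2 * τ + ((m : ℂ) + 1/2) / 2) =
    (((((m : ℝ) + 1/2)^2 / 2 : ℝ)) : ℂ) * τ + ((((m : ℝ) + 1/2) / 2 : ℝ) : ℂ) := by
    push_cast; ring
  rw [this, Complex.add_im, Complex.im_ofReal_mul, Complex.ofReal_im]
  ring

lemma norm_half (m : ℤ) : ‖(m : ℂ) + 1/2‖ = |(m : ℝ) + 1/2| := by
  have : (m : ℂ) + 1/2 = (((m : ℝ) + 1/2 : ℝ) : ℂ) := by push_cast; ring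
  rw [this, Complex.norm_real, Real.norm_eq_abs]

lemma summ_half {v : ℝ} (hv : 0 < v) (k : ℕ) :
    Summable fun m : ℤ => |(m : ℝ) + 1/2| ^ k * Real.exp (-(Real.pi * v) * ((m : ℝ) + 1/2) ^ 2) := by
  have := summ_pow_gauss (le_refl (1:ℝ)) (1/2) (mul_pos Real.pi_pos hv) k
  simpa using this

lemma qp_tendsto {τ : ℂ} (hτ : 0 < τ.im) : ∃ L : ℂ, L ≠ 0 ∧
    Filter.Tendsto (qp (2 * Real.pi * Complex.I * τ)) Filter.atTop (nhds L) := by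
  refine ⟨_, ModularForm.eta_tprod_ne_zero (z := τ) hτ, ?_⟩
  have hq : ‖Complex.exp (2 * Real.pi * Complex.I * τ)‖ < 1 := by
    have := norm_e τ
    rw [e] at this
    rw [this, Real.exp_lt_one_iff]
    nlinarith [mul_pos Real.pi_pos hτ]
  have := (ModularForm.multipliable_one_sub_pow hq).hasProd.tendsto_prod_nat
  have h2 : ∀ n, ModularForm.eta_q n τ = Complex.exp (2 * Real.pi * Complex.I * τ) ^ (n+1) :=
    fun n => ModularForm.eta_q_eq_pow n τ
  simp only [h2]
  refine this.congr fun n => Finset.prod_congr rfl fun i _ => ?_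
  rw [← Complex.exp_nat_mul]; congr 2; push_cast; ring

lemma qp_ne {τ : ℂ} (hτ : 0 < τ.im) (n : ℕ) : qp (2 * Real.pi * Complex.I * τ) n ≠ 0 := by
  rw [qp, Finset.prod_ne_zero_iff]
  intro i _
  have := ModularForm.one_sub_eta_q_ne_zero i (z := τ) hτ
  rw [ModularForm.eta_q_eq_cexp] at this
  convert this using 3; ring

noncomputable def cn (w : ℂ) (n : ℕ) (m : ℤ) : ℂ :=
  if 0 ≤ m + n + 1 then qb w (2 * n + 1) (m + n + 1).toNat else 0

noncomputable def T3 (τ : ℂ) (m : ℤ) : ℂ :=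
  ((m : ℂ) + 1/2) * e (((m : ℂ) + 1/2)^2 / 2 * τ + ((m : ℂ) + 1/2) / 2)

lemma T3_shift (τ : ℂ) (n k : ℕ) : T3 τ ((k : ℤ) - n - 1) =
    -(-1)^n * e (τ / 8 + 1/4) * (((k : ℂ) - n - 1 / 2) * (-1) ^ k *
      Complex.exp ((2 * Real.pi * Complex.I * τ) * (((k : ℂ) - n) * (k - n - 1) / 2))) := by
  have h0 : ∀ j : ℕ, ((-1 : ℂ))^j = Complex.exp (j * (Real.pi * Complex.I)) := by
    intro j; rw [Complex.exp_nat_mul, Complex.exp_pi_mul_I]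
  have h1 : ((-1 : ℂ))^n = Complex.exp (-(n * (Real.pi * Complex.I))) := by
    rw [Complex.exp_neg, ← h0, ← inv_pow]; norm_num
  have h2 : (-1 : ℂ) = Complex.exp (-(Real.pi * Complex.I)) := by
    rw [Complex.exp_neg, Complex.exp_pi_mul_I]; norm_num
  have h3 : -(-1 : ℂ)^n = Complex.exp (-(n * (Real.pi * Complex.I))) * Complex.exp (-(Real.pi * Complex.I)) := by
    rw [← h2, h1]; ring
  rw [h3, h0 k, T3, e, e]
  have : Complex.exp (2 * Real.pi * Complex.I * (((((k : ℤ) - n - 1 : ℤ) : ℂ) + 1/2)^2 / 2 * τ + ((((k : ℤ) - n - 1 : ℤ) : ℂ) + 1/2) / 2))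
    = Complex.exp (-(n * (Real.pi * Complex.I))) * Complex.exp (-(Real.pi * Complex.I)) * Complex.exp (2 * Real.pi * Complex.I * (τ / 8 + 1/4)) *
     (Complex.exp (k * (Real.pi * Complex.I)) * Complex.exp ((2 * Real.pi * Complex.I * τ) * (((k : ℂ) - n) * (k - n - 1) / 2))) := by
    simp only [← Complex.exp_add]
    congr 1; push_cast; ring
  rw [this]; push_cast; ring

lemma tsum_cn (τ : ℂ) (n : ℕ) : ∑' m : ℤ, T3 τ m * cn (2 * Real.pi * Complex.I * τ) n m =
    e (τ / 8 + 1/4) * qp (2 * Real.pi * Complex.I * τ) n ^ 2 := by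
  set w := 2 * Real.pi * Complex.I * τ with hw
  let emb : ℕ ↪ ℤ := ⟨fun k => (k : ℤ) - n - 1, fun a b hab => by
    have : (a : ℤ) - n - 1 = (b : ℤ) - n - 1 := hab
    omega⟩
  rw [tsum_eq_sum (s := (Finset.range (2*n+2)).map emb), Finset.sum_map]
  · have : ∀ k ∈ Finset.range (2*n+2), T3 τ (emb k) * cn w n (emb k) =
       -(-1)^n * e (τ / 8 + 1/4) * (((k : ℂ) - n - 1 / 2) * (-1) ^ k *
      Complex.exp (w * (((k : ℂ) - n) * (k - n - 1) / 2)) * qb w (2*n+1) k) := by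
      intro k _
      have h1 : emb k = (k : ℤ) - n - 1 := rfl
      have h2 : cn w n ((k : ℤ) - n - 1) = qb w (2*n+1) k := by
        have : (k : ℤ) - n - 1 + n + 1 = k := by ring
        rw [cn, this, if_pos (by omega)]; simp
      rw [h1, h2, T3_shift]; ring
    rw [Finset.sum_congr rfl this, ← Finset.mul_sum, finJac]
    have : ((-1 : ℂ)^n) * (-1)^n = 1 := by rw [← mul_pow]; norm_num
    linear_combination e (τ / 8 + 1/4) * qp w n ^ 2 * this
  · intro m hm
    rw [cn]
    split_ifs with h0
    · rw [qb_gt, mul_zero]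
      by_contra hc
      apply hm
      rw [Finset.mem_map]
      refine ⟨(m + n + 1).toNat, by rw [Finset.mem_range]; omega, ?_⟩
      change (((m + n + 1).toNat : ℕ) : ℤ) - n - 1 = m
      omega
    · simp

lemma eta3_ne_zero {τ : ℂ} (hτ : 0 < τ.im) : eta3 τ ≠ 0 := by
  obtain ⟨L, hL, hlim⟩ := qp_tendsto hτ
  set w := 2 * Real.pi * Complex.I * τ with hw
  have hqb : ∀ a b, qb w (a+b) a = qp w (a+b) * ((qp w a)⁻¹ * (qp w b)⁻¹) := by
    intro a b
    have := qb_mul w _ a b rfl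
    have ha := qp_ne hτ a
    have hb := qp_ne hτ b
    rw [← hw] at ha hb
    rw [← this]; field_simp
  obtain ⟨C, hC⟩ := (Metric.isBounded_range_of_tendsto _ hlim).exists_norm_le
  obtain ⟨D, hD⟩ := (Metric.isBounded_range_of_tendsto _ (hlim.inv₀ hL)).exists_norm_le
  have hC' : ∀ n, ‖qp w n‖ ≤ C := fun n => hC _ ⟨n, rfl⟩
  have hD' : ∀ n, ‖(qp w n)⁻¹‖ ≤ D := fun n => hD _ ⟨n, rfl⟩
  have hC0 : 0 ≤ C := (norm_nonneg _).trans (hC' 0)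
  have hD0 : 0 ≤ D := (norm_nonneg _).trans (hD' 0)
  have hcn : ∀ n m, ‖cn w n m‖ ≤ C * (D * D) := by
    intro n m
    rw [cn]
    split_ifs with h0
    · by_cases hle : (m + n + 1).toNat ≤ 2 * n + 1
      · obtain ⟨b, hb⟩ := Nat.exists_eq_add_of_le hle
        rw [hb, hqb, norm_mul, norm_mul]
        gcongr
        · exact hC' _
        · exact hD' _
        · exact hD' _
      · rw [qb_gt _ _ _ (by omega)]; simp; positivity
    · simp; positivity
  have hcl : ∀ m, Filter.Tendsto (fun n => cn w n m) Filter.atTop (nhds L⁻¹) := by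
    intro m
    have t1 : Filter.Tendsto (fun n : ℕ => 2 * n + 1) Filter.atTop Filter.atTop :=
      Filter.tendsto_atTop_mono (fun n => by simp only [id]; omega) Filter.tendsto_id
    have t2 : Filter.Tendsto (fun n : ℕ => (m + n + 1).toNat) Filter.atTop Filter.atTop := by
      refine Filter.tendsto_atTop.2 fun b => ?_
      filter_upwards [Filter.eventually_ge_atTop (b + m.natAbs)] with n hn
      omega
    have t3 : Filter.Tendsto (fun n : ℕ => (n - m).toNat) Filter.atTop Filter.atTop := by
      refine Filter.tendsto_atTop.2 fun b => ?_
      filter_upwards [Filter.eventually_ge_atTop (b + m.natAbs)] with n hn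
      omega
    have := (hlim.comp t1).mul (((hlim.comp t2).inv₀ hL).mul ((hlim.comp t3).inv₀ hL))
    rw [show L * (L⁻¹ * L⁻¹) = L⁻¹ by field_simp] at this
    refine this.congr' ?_
    filter_upwards [Filter.eventually_ge_atTop m.natAbs] with n hn
    have e1 : 2 * n + 1 = (m + n + 1).toNat + (n - m).toNat := by omega
    rw [cn, if_pos (by omega)]
    simp only [Function.comp]
    rw [e1, hqb]
  have hsum : Summable fun m : ℤ => ‖T3 τ m‖ := by
    refine (summ_half hτ 1).congr fun m => ?_
    rw [T3, norm_mul, norm_half, norm_e_half, pow_one]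
  have hdom := tendsto_tsum_of_dominated_convergence (f := fun n m => T3 τ m * cn w n m)
    (g := fun m => T3 τ m * L⁻¹) (𝓕 := Filter.atTop) (hsum.mul_right (C * (D * D)))
    (fun m => (hcl m).const_mul _) (Filter.Eventually.of_forall fun n m => by
      rw [norm_mul]; gcongr; exact hcn n m)
  have hlim2 := (hlim.pow 2).const_mul (e (τ / 8 + 1/4))
  simp only [hw, tsum_cn] at hdom
  have huniq := tendsto_nhds_unique hdom hlim2
  rw [tsum_mul_right] at huniq
  intro h0
  have : ∑' m : ℤ, T3 τ m = 0 := by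
    have : eta3 τ = -Complex.I * ∑' m : ℤ, T3 τ m := rfl
    rw [this] at h0
    simpa using h0
  rw [this, zero_mul] at huniq
  have he : e (τ / 8 + 1/4) ≠ 0 := Complex.exp_ne_zero _
  exact mul_ne_zero he (pow_ne_zero 2 hL) huniq.symm

lemma isOpen_U (v : ℝ) : IsOpen {w : ℂ | v < w.im} := isOpen_lt continuous_const Complex.continuous_im

lemma diffAt_of_U {f : ℂ → ℂ} (hf : ∀ v : ℝ, 0 < v → DifferentiableOn ℂ f {w : ℂ | v < w.im})
    {τ : ℂ} (hτ : 0 < τ.im) : DifferentiableAt ℂ f τ :=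
  (hf (τ.im / 2) (by linarith)).differentiableAt ((isOpen_U _).mem_nhds (by simp; linarith))

lemma eta3_diff {τ : ℂ} (hτ : 0 < τ.im) : DifferentiableAt ℂ eta3 τ := by
  refine diffAt_of_U (fun v hv => ?_) hτ
  unfold eta3
  refine DifferentiableOn.const_mul ?_ _
  refine Complex.differentiableOn_tsum_of_summable_norm (summ_half hv 1) (fun m => ?_) (isOpen_U v) ?_
  · unfold e; fun_prop
  · intro m w hw
    have hw : v < w.im := hw
    rw [norm_mul, norm_half, norm_e_half, pow_one]
    gcongr

lemma sigma1_le (n : ℕ) : (sigma1 (n+1) : ℝ) ≤ ((n : ℝ) + 1) ^ 2 := by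
  have : sigma1 (n+1) ≤ (n+1) * (n+1) := by
    unfold sigma1
    calc ∑ d ∈ Nat.divisors (n+1), d ≤ ∑ d ∈ Nat.divisors (n+1), (n+1) :=
          Finset.sum_le_sum fun d hd => Nat.divisor_le hd
      _ = (Nat.divisors (n+1)).card * (n+1) := by simp
      _ ≤ _ := Nat.mul_le_mul_right _ (Nat.card_divisors_le_self _)
  calc (sigma1 (n+1) : ℝ) ≤ ((n+1) * (n+1) : ℕ) := by exact_mod_cast this
    _ = _ := by push_cast; ring

lemma E2_diff {τ : ℂ} (hτ : 0 < τ.im) : DifferentiableAt ℂ E2 τ := by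
  refine diffAt_of_U (fun v hv => ?_) hτ
  unfold E2
  refine (DifferentiableOn.const_mul ?_ _).const_sub _
  have hs : Summable fun n : ℕ => ((n : ℝ) + 1) ^ 2 * Real.exp (-(2 * Real.pi * v) * (n + 1)) := by
    have h1 := summ_pow_exp (le_refl (1:ℝ)) 1 (show 0 < 2 * Real.pi * v by positivity) 2
    have h2 := h1.comp_injective Nat.cast_injective
    refine h2.congr fun n => ?_
    have : |(1 : ℝ) * ((n : ℤ) : ℝ) + 1| = n + 1 := by
      rw [abs_of_nonneg (by push_cast; positivity)]; push_cast; ring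
    simp only [Function.comp]
    rw [this]
  refine Complex.differentiableOn_tsum_of_summable_norm hs (fun m => ?_) (isOpen_U v) ?_
  · unfold e; fun_prop
  · intro n w hw
    have hw : v < w.im := hw
    rw [norm_mul, norm_e]
    have : ((n + 1 : ℂ) * w).im = (n + 1) * w.im := by
      rw [show (n + 1 : ℂ) = ((n + 1 : ℝ) : ℂ) by push_cast; ring, Complex.im_ofReal_mul]
    rw [this]
    have h3 := sigma1_le n
    have h4 : ‖(sigma1 (n+1) : ℂ)‖ = sigma1 (n+1) := by simp
    rw [h4]
    gcongr ?_ * Real.exp ?_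
    have := mul_le_mul_of_nonneg_left hw.le (show 0 ≤ 2 * Real.pi * (n + 1 : ℝ) by positivity)
    linarith

noncomputable def P (x : ℝ) (m : ℤ) (τ : ℂ) : ℂ :=
  (Real.sign x : ℂ) * (e (-(x : ℂ)^2 * τ / 2) * if |x| < (m : ℝ) + 1/2 then
      (((m : ℝ) + 1/2 - |x| : ℝ) : ℂ) * e (((m : ℂ) + 1/2)^2 / 2 * τ + ((m : ℂ) + 1/2) / 2)
    else 0)

lemma gplus_eq (τ : ℂ) (x : ℝ) : gplus τ x = (Complex.I * eta3 τ)⁻¹ * ∑' m, P x m τ := by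
  unfold P
  rw [tsum_mul_left, tsum_mul_left, gplus, div_eq_mul_inv]
  ring

lemma norm_e_x (x : ℝ) (τ : ℂ) : ‖e (-(x : ℂ)^2 * τ / 2)‖ = Real.exp (Real.pi * τ.im * x ^ 2) := by
  rw [norm_e]
  have : (-(x : ℂ)^2 * τ / 2) = ((-x^2/2 : ℝ) : ℂ) * τ := by push_cast; ring
  rw [this, Complex.im_ofReal_mul]
  congr 1; ring

lemma norm_sign_le (x : ℝ) : ‖(Real.sign x : ℂ)‖ ≤ 1 := by
  rw [Complex.norm_real]
  rcases Real.sign_apply_eq x with h | h | h <;> rw [h] <;> simp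

lemma P_bound {c v x : ℝ} {m : ℤ} {τ : ℂ} (hc : 0 < c) (hv : 0 < v) (hτ : v < τ.im)
    (hx : |x| < (m : ℝ) + 1/2 → c ≤ (m : ℝ) + 1/2 - |x|) :
    ‖P x m τ‖ ≤ (|(1:ℝ) * m + 1/2| ^ 1 * Real.exp (-(Real.pi * v * c) * |(1:ℝ) * m + 1/2|)) *
      Real.exp (-(Real.pi * v * c) * |x|) := by
  rw [one_mul, pow_one]
  unfold P
  split_ifs with h
  · have hμ : 0 < (m : ℝ) + 1/2 := (abs_nonneg x).trans_lt h
    have hc' := hx h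
    rw [norm_mul, norm_mul, norm_mul, norm_e_x, norm_e_half, Complex.norm_real ((m : ℝ) + 1/2 - |x|), Real.norm_eq_abs]
    set μ := (m : ℝ) + 1/2
    rw [abs_of_pos hμ, abs_of_pos (by linarith : 0 < μ - |x|)]
    calc ‖(Real.sign x : ℂ)‖ * (Real.exp (Real.pi * τ.im * x ^ 2) * ((μ - |x|) *
          Real.exp (-(Real.pi * τ.im) * μ ^ 2)))
        ≤ 1 * (Real.exp (Real.pi * τ.im * x ^ 2) * (μ *
          Real.exp (-(Real.pi * τ.im) * μ ^ 2))) := by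
          gcongr
          · exact norm_sign_le x
          · linarith [abs_nonneg x]
      _ = μ * Real.exp (Real.pi * τ.im * x ^ 2 + -(Real.pi * τ.im) * μ ^ 2) := by
          rw [Real.exp_add]; ring
      _ ≤ μ * Real.exp (-(Real.pi * v * c) * μ + -(Real.pi * v * c) * |x|) := by
          gcongr μ * Real.exp ?_
          have h1 : Real.pi * τ.im * x ^ 2 + -(Real.pi * τ.im) * μ ^ 2 =
            -(Real.pi * (τ.im * ((μ - |x|) * (μ + |x|)))) := by
            rw [← sq_abs x]; ring
          have h2 : -(Real.pi * v * c) * μ + -(Real.pi * v * c) * |x| =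
            -(Real.pi * (v * (c * (μ + |x|)))) := by ring
          rw [h1, h2, neg_le_neg_iff]
          have h3 : 0 ≤ τ.im := by linarith
          gcongr
      _ = _ := by rw [Real.exp_add]; ring
  · simp; positivity

lemma exists_c (N : ℕ) (h : ℝ) : ∃ c : ℝ, 0 < c ∧ ∀ n m : ℤ, |(N : ℝ) * n + h| < (m : ℝ) + 1/2 →
    c ≤ (m : ℝ) + 1/2 - |(N : ℝ) * n + h| := by
  have key : ∀ t : ℝ, ∀ k : ℤ, 0 < (k : ℝ) - t → (⌊t⌋ : ℝ) + 1 - t ≤ k - t := by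
    intro t k hk
    have : ⌊t⌋ < k := Int.floor_lt.2 (by linarith)
    have : ((⌊t⌋ + 1 : ℤ) : ℝ) ≤ k := by exact_mod_cast this
    push_cast at this
    linarith
  refine ⟨min (⌊h - 1/2⌋ + 1 - (h - 1/2)) (⌊-h - 1/2⌋ + 1 - (-h - 1/2)), ?_, ?_⟩
  · apply lt_min
    · linarith [Int.lt_floor_add_one (h - 1/2)]
    · linarith [Int.lt_floor_add_one (-h - 1/2)]
  · intro n m hlt
    rcases abs_cases ((N : ℝ) * n + h) with ⟨h1, _⟩ | ⟨h1, _⟩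
    · rw [h1] at hlt ⊢
      have := key (h - 1/2) (m - N * n) (by push_cast; linarith)
      push_cast at this
      exact (min_le_left _ _).trans (by linarith)
    · rw [h1] at hlt ⊢
      have := key (-h - 1/2) (m + N * n) (by push_cast; linarith)
      push_cast at this
      exact (min_le_right _ _).trans (by linarith)

lemma gplus_main (N : ℕ) (hN : 0 < N) (h : ℝ) :
    (∀ τ : ℂ, 0 < τ.im → Summable fun n : ℤ => gplus τ ((N : ℝ) * n + h)) ∧
    (∀ τ : ℂ, 0 < τ.im → DifferentiableAt ℂ (fun τ => ∑' n : ℤ, gplus τ ((N : ℝ) * n + h)) τ) := by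
  have hN1 : (1 : ℝ) ≤ N := by exact_mod_cast hN
  obtain ⟨c, hc, hcc⟩ := exists_c N h
  have hb : ∀ v : ℝ, 0 < v → ∀ n m : ℤ, ∀ w : ℂ, w ∈ {w : ℂ | v < w.im} →
      ‖P ((N : ℝ) * n + h) m w‖ ≤ (|(1:ℝ) * m + 1/2| ^ 1 * Real.exp (-(Real.pi * v * c) * |(1:ℝ) * m + 1/2|)) *
      Real.exp (-(Real.pi * v * c) * |(N : ℝ) * n + h|) := fun v hv n m w hw =>
    P_bound hc hv hw (hcc n m)
  have hs1 : ∀ v : ℝ, 0 < v → Summable fun m : ℤ => |(1:ℝ) * m + 1/2| ^ 1 * Real.exp (-(Real.pi * v * c) * |(1:ℝ) * m + 1/2|) :=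
    fun v hv => summ_pow_exp le_rfl _ (by positivity) 1
  have hs2 : ∀ v : ℝ, 0 < v → Summable fun n : ℤ => Real.exp (-(Real.pi * v * c) * |(N : ℝ) * n + h|) :=
    fun v hv => summ_exp hN1 _ (by positivity)
  have hF : ∀ v : ℝ, 0 < v → ∀ n : ℤ, ∀ w ∈ {w : ℂ | v < w.im}, ‖∑' m, P ((N : ℝ) * n + h) m w‖ ≤
      (∑' m : ℤ, |(1:ℝ) * m + 1/2| ^ 1 * Real.exp (-(Real.pi * v * c) * |(1:ℝ) * m + 1/2|)) *
        Real.exp (-(Real.pi * v * c) * |(N : ℝ) * n + h|) := fun v hv n w hw =>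
    tsum_of_norm_bounded ((hs1 v hv).hasSum.mul_right _) (fun m => hb v hv n m w hw)
  constructor
  · intro τ hτ
    simp only [gplus_eq]
    apply Summable.mul_left
    have hτ2 : 0 < τ.im / 2 := by linarith
    exact Summable.of_norm_bounded ((hs2 (τ.im/2) hτ2).mul_left _) fun n =>
      hF (τ.im/2) hτ2 n τ (by simp; linarith)
  · intro τ hτ
    have : (fun τ => ∑' n : ℤ, gplus τ ((N : ℝ) * n + h)) = fun τ => (Complex.I * eta3 τ)⁻¹ *
        ∑' n : ℤ, ∑' m : ℤ, P ((N : ℝ) * n + h) m τ := by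
      funext τ
      simp only [gplus_eq, tsum_mul_left]
    rw [this]
    refine DifferentiableAt.mul ?_ ?_
    · exact ((eta3_diff hτ).const_mul _).inv (mul_ne_zero Complex.I_ne_zero (eta3_ne_zero hτ))
    · refine diffAt_of_U (f := fun τ => ∑' n : ℤ, ∑' m : ℤ, P ((N : ℝ) * n + h) m τ) (fun v hv => ?_) hτ
      refine Complex.differentiableOn_tsum_of_summable_norm ((hs2 v hv).mul_left _) (fun n => ?_)
        (isOpen_U v) (hF v hv)
      refine Complex.differentiableOn_tsum_of_summable_norm ((hs1 v hv).mul_right _) (fun m => ?_)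
        (isOpen_U v) (hb v hv n)
      unfold P e
      split_ifs <;> fun_prop

lemma int_gauss : Integrable (fun t : ℝ => Real.exp (-t^2)) := by
  simpa using integrable_exp_neg_mul_sq (b := 1) one_pos

lemma erfc_deriv (y : ℝ) : HasDerivAt erfc (-(2 / Real.sqrt Real.pi) * Real.exp (-y^2)) y := by
  have h1 : erfc = fun y => (2 / Real.sqrt Real.pi) * ((∫ t in Set.Ioi (0:ℝ), Real.exp (-t^2)) -
      ∫ t in (0:ℝ)..y, Real.exp (-t^2)) := by
    funext y
    rw [erfc, ← intervalIntegral.integral_Ioi_sub_Ioi' int_gauss.integrableOn int_gauss.integrableOn]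
    ring
  rw [h1]
  have hc : Continuous fun t : ℝ => Real.exp (-t^2) := by fun_prop
  have h2 : HasDerivAt (fun y => ∫ t in (0:ℝ)..y, Real.exp (-t^2)) (Real.exp (-y^2)) y :=
    intervalIntegral.integral_hasDerivAt_right (hc.intervalIntegrable _ _)
      hc.stronglyMeasurable.stronglyMeasurableAtFilter hc.continuousAt
  refine ((h2.const_sub _).const_mul _).congr_deriv ?_
  ring

lemma erfc_nonneg (y : ℝ) : 0 ≤ erfc y :=
  mul_nonneg (by positivity) (integral_nonneg fun t => (Real.exp_pos _).le)

lemma erfc_le {y : ℝ} (hy : 0 ≤ y) : erfc y ≤ 2 * Real.exp (-y^2) := by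
  have hi : Integrable (fun t : ℝ => Real.exp (-y^2) * Real.exp (-(t - y)^2)) :=
    (int_gauss.comp_sub_right y).const_mul _
  have h1 : ∫ t in Set.Ioi y, Real.exp (-t^2) ≤ Real.exp (-y^2) * Real.sqrt Real.pi := by
    calc ∫ t in Set.Ioi y, Real.exp (-t^2) ≤ ∫ t in Set.Ioi y, Real.exp (-y^2) * Real.exp (-(t - y)^2) := by
          refine setIntegral_mono_on int_gauss.integrableOn hi.integrableOn measurableSet_Ioi fun t ht => ?_
          have ht : y < t := ht
          rw [← Real.exp_add, Real.exp_le_exp]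
          nlinarith [mul_nonneg hy (sub_nonneg.2 ht.le)]
      _ ≤ ∫ t, Real.exp (-y^2) * Real.exp (-(t - y)^2) :=
          setIntegral_le_integral hi (Filter.Eventually.of_forall fun t => by positivity)
      _ = Real.exp (-y^2) * Real.sqrt Real.pi := by
          rw [integral_const_mul, integral_sub_right_eq_self (fun t : ℝ => Real.exp (-t^2)) y]
          congr 1
          simpa using integral_gaussian 1
  have hp : 0 < Real.sqrt Real.pi := Real.sqrt_pos.2 Real.pi_pos
  calc erfc y ≤ (2 / Real.sqrt Real.pi) * (Real.exp (-y^2) * Real.sqrt Real.pi) := by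
        unfold erfc; gcongr
    _ = _ := by field_simp

noncomputable def rho' (x v : ℝ) : ℝ := -(Real.sqrt 2 * |x| / Real.sqrt v) * Real.exp (-(2 * Real.pi * v * x ^ 2))

lemma rho_deriv (x : ℝ) {v : ℝ} (hv : 0 < v) :
    HasDerivAt (fun v => erfc (Real.sqrt (2 * Real.pi * v) * |x|)) (rho' x v) v := by
  have hpi := Real.pi_pos
  have h1 : HasDerivAt (fun v => Real.sqrt (2 * Real.pi * v) * |x|)
      ((2 * Real.pi * 1) / (2 * Real.sqrt (2 * Real.pi * v)) * |x|) v :=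
    (((hasDerivAt_id v).const_mul (2 * Real.pi)).sqrt (by simp; positivity)).mul_const _
  refine ((erfc_deriv _).comp v h1).congr_deriv ?_
  have e1 : (Real.sqrt (2 * Real.pi * v) * |x|)^2 = 2 * Real.pi * v * x ^ 2 := by
    rw [mul_pow, Real.sq_sqrt (by positivity), sq_abs]
  rw [e1, rho', Real.sqrt_mul (by positivity), Real.sqrt_mul (by positivity)]
  have a1 : 0 < Real.sqrt Real.pi := Real.sqrt_pos.2 hpi
  have a2 : 0 < Real.sqrt v := Real.sqrt_pos.2 hv
  have a3 : 0 < Real.sqrt 2 := Real.sqrt_pos.2 (by norm_num)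
  have b1 : Real.sqrt Real.pi ^ 2 = Real.pi := Real.sq_sqrt hpi.le
  have b3 : Real.sqrt 2 ^ 2 = 2 := Real.sq_sqrt (by norm_num)
  field_simp
  rw [b1, b3]
  ring

noncomputable def acoef (x : ℝ) (τ : ℂ) : ℂ := -(Real.pi * Complex.I * (x : ℂ)^2) * gstar τ x
noncomputable def bcoef (x : ℝ) (τ : ℂ) : ℂ :=
  e (-(x : ℂ)^2 * τ / 2) * ((Real.sign x : ℂ) / 2) * (rho' x τ.im : ℂ)

noncomputable def Dg (x : ℝ) (τ : ℂ) : ℂ →L[ℝ] ℂ :=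
  acoef x τ • ContinuousLinearMap.id ℝ ℂ + bcoef x τ • (Complex.ofRealCLM.comp Complex.imCLM)

lemma gstar_hasFDerivAt (x : ℝ) {τ : ℂ} (hτ : 0 < τ.im) :
    HasFDerivAt (fun τ => gstar τ x) (Dg x τ) τ := by
  have hA : HasDerivAt (fun τ : ℂ => e (-(x : ℂ)^2 * τ / 2) * ((Real.sign x : ℂ) / 2))
      (e (-(x : ℂ)^2 * τ / 2) * (2 * Real.pi * Complex.I * (-(x : ℂ)^2 * 1 / 2)) * ((Real.sign x : ℂ) / 2)) τ := by
    unfold e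
    exact (((((hasDerivAt_id τ).const_mul (-(x : ℂ)^2)).div_const 2).const_mul
      (2 * (Real.pi : ℂ) * Complex.I)).cexp).mul_const _
  have hA' := hA.hasFDerivAt.restrictScalars ℝ
  have hR : HasFDerivAt (fun τ : ℂ => ((erfc (Real.sqrt (2 * Real.pi * τ.im) * |x|) : ℝ) : ℂ))
      (Complex.ofRealCLM.comp (rho' x τ.im • Complex.imCLM)) τ :=
    Complex.ofRealCLM.hasFDerivAt.comp τ ((rho_deriv x hτ).comp_hasFDerivAt τ Complex.imCLM.hasFDerivAt)
  have := hA'.mul hR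
  unfold gstar
  refine this.congr_fderiv ?_
  ext z
  simp [Dg, acoef, bcoef, gstar]
  ring

lemma Dg_dbar (x : ℝ) (τ : ℂ) : Dg x τ 1 + Complex.I * Dg x τ Complex.I = Complex.I * bcoef x τ := by
  simp [Dg]
  linear_combination acoef x τ * Complex.I_mul_I

lemma sign_mul_abs' (x : ℝ) : Real.sign x * |x| = x := by
  rcases lt_trichotomy x 0 with h | h | h
  · rw [Real.sign_of_neg h, abs_of_neg h]; ring
  · simp [h]
  · rw [Real.sign_of_pos h, abs_of_pos h]; ring

lemma gstar_bound (x : ℝ) {v : ℝ} (hv : 0 < v) {τ : ℂ} (hτ : v ≤ τ.im) :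
    ‖gstar τ x‖ ≤ Real.exp (-(Real.pi * v) * x ^ 2) := by
  have h0 : 0 < τ.im := by linarith
  have hpi := Real.pi_pos
  have h1 := erfc_le (y := Real.sqrt (2 * Real.pi * τ.im) * |x|) (by positivity)
  have e1 : (Real.sqrt (2 * Real.pi * τ.im) * |x|)^2 = 2 * Real.pi * τ.im * x ^ 2 := by
    rw [mul_pow, Real.sq_sqrt (by positivity), sq_abs]
  rw [e1] at h1
  rw [gstar, norm_mul, norm_mul, norm_e_x, Complex.norm_real (erfc _), Real.norm_of_nonneg (erfc_nonneg _), norm_div]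
  calc _ ≤ Real.exp (Real.pi * τ.im * x ^ 2) * (1 / ‖(2:ℂ)‖) * (2 * Real.exp (-(2 * Real.pi * τ.im * x ^ 2))) := by
        gcongr
        · exact erfc_nonneg _
        · exact norm_sign_le x
    _ = Real.exp (-(Real.pi * τ.im) * x ^ 2) := by
        have : Real.exp (-(Real.pi * τ.im) * x ^ 2) =
          Real.exp (Real.pi * τ.im * x ^ 2) * Real.exp (-(2 * Real.pi * τ.im * x ^ 2)) := by
          rw [← Real.exp_add]; congr 1; ring
        rw [this]; simp; ring
    _ ≤ _ := by gcongr

lemma bcoef_eq (x : ℝ) {τ : ℂ} (hτ : 0 < τ.im) :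
    bcoef x τ = -((x : ℂ) / (Real.sqrt 2 * Real.sqrt τ.im)) *
      (starRingEnd ℂ) (e (((x ^ 2 / 2 : ℝ) : ℂ) * τ)) := by
  have hE : (starRingEnd ℂ) (e (((x ^ 2 / 2 : ℝ) : ℂ) * τ)) =
      e (-(x : ℂ)^2 * τ / 2) * Complex.exp (-(2 * Real.pi * τ.im * x ^ 2)) := by
    unfold e
    rw [← Complex.exp_conj, ← Complex.exp_add]
    congr 1
    have hc : (starRingEnd ℂ) τ = τ - 2 * Complex.I * τ.im := by
      apply Complex.ext <;> simp
      ring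
    simp only [map_mul, Complex.conj_I, Complex.conj_ofReal, map_ofNat, hc]
    push_cast
    linear_combination 2 * Real.pi * τ.im * (x : ℂ)^2 * Complex.I_mul_I
  have a2 : (Real.sqrt τ.im : ℂ) ≠ 0 := by
    exact_mod_cast (Real.sqrt_pos.2 hτ).ne'
  have a3 : (Real.sqrt 2 : ℂ) ≠ 0 := by
    exact_mod_cast (Real.sqrt_pos.2 (by norm_num : (0:ℝ) < 2)).ne'
  have b3 : (Real.sqrt 2 : ℂ) ^ 2 = 2 := by
    exact_mod_cast Real.sq_sqrt (by norm_num : (0:ℝ) ≤ 2)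
  have hx : (Real.sign x : ℂ) * (|x| : ℝ) = x := by exact_mod_cast sign_mul_abs' x
  have key : (Real.sign x : ℂ) / 2 * (-(Real.sqrt 2 * (|x| : ℝ) / Real.sqrt τ.im)) =
      -((x : ℂ) / (Real.sqrt 2 * Real.sqrt τ.im)) := by
    rw [← hx]
    field_simp
    rw [b3]
  rw [hE, bcoef, rho']
  push_cast
  linear_combination e (-(x : ℂ)^2 * τ / 2) * Complex.exp (-(2 * Real.pi * τ.im * x ^ 2)) * key

lemma bcoef_bound (x : ℝ) {v : ℝ} (hv : 0 < v) {τ : ℂ} (hτ : v ≤ τ.im) :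
    ‖bcoef x τ‖ ≤ (Real.sqrt v)⁻¹ * (|x| * Real.exp (-(Real.pi * v) * x ^ 2)) := by
  have h0 : 0 < τ.im := by linarith
  have hpi := Real.pi_pos
  rw [bcoef_eq x h0, norm_mul, norm_neg, norm_div, norm_mul, RCLike.norm_conj, norm_e,
    Complex.im_ofReal_mul, Complex.norm_real, Complex.norm_real, Complex.norm_real, Real.norm_eq_abs,
    Real.norm_of_nonneg (Real.sqrt_nonneg _), Real.norm_of_nonneg (Real.sqrt_nonneg _)]
  have a3 : 1 ≤ Real.sqrt 2 := Real.one_le_sqrt.2 (by norm_num)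
  have a2 : 0 < Real.sqrt v := Real.sqrt_pos.2 hv
  have a4 : Real.sqrt v ≤ Real.sqrt τ.im := Real.sqrt_le_sqrt hτ
  calc |x| / (Real.sqrt 2 * Real.sqrt τ.im) * Real.exp (-2 * Real.pi * (x ^ 2 / 2 * τ.im))
      ≤ |x| / (1 * Real.sqrt v) * Real.exp (-(Real.pi * v) * x ^ 2) := by
        gcongr ?_ * Real.exp ?_
        · gcongr
        · have := mul_le_mul_of_nonneg_left hτ (show 0 ≤ Real.pi * x ^ 2 by positivity)
          linarith
    _ = _ := by rw [one_mul]; ring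

lemma Dg_bound (x : ℝ) {v : ℝ} (hv : 0 < v) {τ : ℂ} (hτ : v ≤ τ.im) :
    ‖Dg x τ‖ ≤ Real.pi * (|x| ^ 2 * Real.exp (-(Real.pi * v) * x ^ 2)) +
      (Real.sqrt v)⁻¹ * (|x| ^ 1 * Real.exp (-(Real.pi * v) * x ^ 2)) := by
  have ha : ‖acoef x τ‖ ≤ Real.pi * (|x| ^ 2 * Real.exp (-(Real.pi * v) * x ^ 2)) := by
    rw [acoef, norm_mul, norm_neg, norm_mul, norm_mul, norm_pow, Complex.norm_I, Complex.norm_real,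
      Complex.norm_real, Real.norm_eq_abs, Real.norm_eq_abs, abs_of_pos Real.pi_pos, mul_one, mul_assoc]
    have := gstar_bound x hv hτ
    gcongr
  have hb := bcoef_bound x hv hτ
  rw [pow_one]
  refine ContinuousLinearMap.opNorm_le_bound _ (by positivity) fun z => ?_
  have : Dg x τ z = acoef x τ * z + bcoef x τ * (z.im : ℂ) := by simp [Dg]
  rw [this]
  calc ‖acoef x τ * z + bcoef x τ * (z.im : ℂ)‖ ≤ ‖acoef x τ‖ * ‖z‖ + ‖bcoef x τ‖ * ‖(z.im : ℂ)‖ := by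
        refine (norm_add_le _ _).trans ?_
        rw [norm_mul, norm_mul]
    _ ≤ ‖acoef x τ‖ * ‖z‖ + ‖bcoef x τ‖ * ‖z‖ := by
        gcongr
        rw [Complex.norm_real]; exact Complex.abs_im_le_norm z
    _ ≤ _ := by rw [← add_mul]; gcongr

lemma gstar_summable (N : ℕ) (hN : 0 < N) (h : ℝ) {τ : ℂ} (hτ : 0 < τ.im) :
    Summable fun n : ℤ => gstar τ ((N : ℝ) * n + h) := by
  have hN1 : (1 : ℝ) ≤ N := by exact_mod_cast hN
  have := summ_pow_gauss hN1 h (mul_pos Real.pi_pos hτ) 0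
  refine Summable.of_norm_bounded this fun n => ?_
  rw [pow_zero, one_mul]
  exact gstar_bound _ hτ le_rfl

lemma gstar_main (N : ℕ) (hN : 0 < N) (h : ℝ) {τ : ℂ} (hτ : 0 < τ.im) :
    (Summable fun n : ℤ => Dg ((N : ℝ) * n + h) τ) ∧
    HasFDerivAt (fun τ => ∑' n : ℤ, gstar τ ((N : ℝ) * n + h)) (∑' n : ℤ, Dg ((N : ℝ) * n + h) τ) τ := by
  have hN1 : (1 : ℝ) ≤ N := by exact_mod_cast hN
  have hv : 0 < τ.im / 2 := by linarith
  have hu := ((summ_pow_gauss hN1 h (mul_pos Real.pi_pos hv) 2).mul_left Real.pi).add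
    ((summ_pow_gauss hN1 h (mul_pos Real.pi_pos hv) 1).mul_left (Real.sqrt (τ.im / 2))⁻¹)
  have hmem : τ ∈ {w : ℂ | τ.im / 2 < w.im} := by simp; linarith
  constructor
  · exact Summable.of_norm_bounded hu fun n => Dg_bound _ hv hmem.le
  · exact hasFDerivAt_tsum_of_isPreconnected hu (isOpen_U (τ.im / 2))
      (convex_halfSpace_im_gt _).isPreconnected
      (fun n w hw => gstar_hasFDerivAt _ (hv.trans hw))
      (fun n w hw => Dg_bound _ hv (le_of_lt hw)) hmem (gstar_summable N hN h hτ) hmem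

set_option maxHeartbeats 1000000 in
/-- `ξ_{1/2} ϑ̃_{N,h} = (1/√2)·𝛉_{N,h}`. -/
theorem xi_tvtheta (N : ℕ) (hN : 0 < N) (hNe : Even N) (h : ℝ)
    (hh : ∃ k : ℤ, h = (k : ℝ) / N) (τ : ℂ) (hτ : 0 < τ.im) :
    xi (1/2) (tvtheta N h) τ =
      (1 / (Real.sqrt 2 : ℂ)) *
        ∑' n : ℤ, (((N : ℝ) * n + h : ℝ) : ℂ) *
          e (((((N : ℝ) * n + h)^2 / 2 : ℝ) : ℂ) * τ) := by
  have hv : 0 < Real.sqrt τ.im := Real.sqrt_pos.2 hτ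
  obtain ⟨hps, hpd⟩ := gplus_main N hN h
  obtain ⟨hDs, hD⟩ := gstar_main N hN h hτ
  set H : ℂ → ℂ := fun τ => (if ∃ m : ℤ, h = (m : ℝ) + 1/2 then
      e ((h : ℂ) / 2) * E2 τ / (12 * (N : ℂ) * Complex.I * eta3 τ) else 0)
    + ∑' n : ℤ, gplus τ ((N : ℝ) * n + h) with hH
  have hHd : DifferentiableAt ℂ H τ := by
    refine DifferentiableAt.add ?_ (hpd τ hτ)
    split_ifs
    · have hN0 : (N : ℂ) ≠ 0 := by exact_mod_cast hN.ne'
      exact ((E2_diff hτ).const_mul _).div ((eta3_diff hτ).const_mul _)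
        (mul_ne_zero (mul_ne_zero (mul_ne_zero (by norm_num) hN0) Complex.I_ne_zero) (eta3_ne_zero hτ))
    · exact differentiableAt_const _
  have hHf := hHd.hasDerivAt.hasFDerivAt.restrictScalars ℝ
  have heq : tvtheta N h =ᶠ[nhds τ] fun w => H w - ∑' n : ℤ, gstar w ((N : ℝ) * n + h) := by
    filter_upwards [(isOpen_U 0).mem_nhds hτ] with w hw
    have hw : 0 < w.im := hw
    rw [tvtheta, hH]
    simp only [gfun]
    rw [(hps w hw).tsum_sub (gstar_summable N hN h hw)]
    ring
  have hfd := ((hHf.sub hD).congr_of_eventuallyEq heq).fderiv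
  have happ : ∀ z : ℂ, (∑' n : ℤ, Dg ((N : ℝ) * n + h) τ) z = ∑' n : ℤ, Dg ((N : ℝ) * n + h) τ z :=
    fun z => (ContinuousLinearMap.apply ℝ ℂ z).map_tsum hDs
  have hsz : ∀ z : ℂ, Summable fun n : ℤ => Dg ((N : ℝ) * n + h) τ z :=
    fun z => (ContinuousLinearMap.apply ℝ ℂ z).summable hDs
  have hdbar : fderiv ℝ (tvtheta N h) τ 1 + Complex.I * fderiv ℝ (tvtheta N h) τ Complex.I =
      -∑' n : ℤ, Complex.I * bcoef ((N : ℝ) * n + h) τ := by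
    have : ∑' n : ℤ, Complex.I * bcoef ((N : ℝ) * n + h) τ =
        (∑' n : ℤ, Dg ((N : ℝ) * n + h) τ 1) + Complex.I * ∑' n : ℤ, Dg ((N : ℝ) * n + h) τ Complex.I := by
      rw [← tsum_mul_left, ← (hsz 1).tsum_add ((hsz _).mul_left _)]
      exact tsum_congr fun n => (Dg_dbar _ _).symm
    rw [this, hfd]
    simp [happ]
    linear_combination deriv H τ * Complex.I_mul_I
  rw [xi, hdbar, ← Real.sqrt_eq_rpow, map_mul, map_neg, Complex.conj_tsum, ← tsum_neg,
    ← tsum_mul_left, ← tsum_mul_left, ← tsum_mul_left]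
  refine tsum_congr fun n => ?_
  rw [bcoef_eq _ hτ]
  have a2 : (Real.sqrt τ.im : ℂ) ≠ 0 := by exact_mod_cast hv.ne'
  have a3 : (Real.sqrt 2 : ℂ) ≠ 0 := by
    exact_mod_cast (Real.sqrt_pos.2 (by norm_num : (0:ℝ) < 2)).ne'
  simp only [map_mul, map_neg, map_div₀, Complex.conj_I, Complex.conj_conj, Complex.conj_ofReal, map_one, map_ofNat]
  field_simp
  linear_combination (-1 : ℂ) * ((N * n + h : ℝ) : ℂ) * e ((((N * n + h : ℝ) ^ 2 / 2 : ℝ) : ℂ) * τ) * Complex.I_sq
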